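/- Let P be a Markov transition kernel on a Polish space Y with distance-like function d and induced Wasserstein-like function W. Then for any probability measures μ₁, μ₂ on Y, W(μ₁P, μ₂P) ≤ τ(P)·W(μ₁, μ₂), where τ(P) is the Wasserstein contraction coefficient of P. -/

import Mathlib

open MeasureTheory ENNReal ProbabilityTheory

/-- The Wasserstein-like function induced by a distance-like function `d`:
infimum over couplings `ξ` of `μ₁, μ₂` of `∫ d dξ`. -/
noncomputable def wassersteinLike {Y : Type*} [MeasurableSpace Y]
    (d : Y → Y → ℝ) (μ₁ μ₂ : Measure Y) : ℝ≥0∞ :=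
  ⨅ (ξ : Measure (Y × Y)) (_ : ξ.map Prod.fst = μ₁) (_ : ξ.map Prod.snd = μ₂),
    ∫⁻ p, ENNReal.ofReal (d p.1 p.2) ∂ξ

/-- The Wasserstein contraction coefficient
`τ(P) = sup_{y₁ ≠ y₂} W(P(y₁,·), P(y₂,·)) / d(y₁,y₂)`. -/
noncomputable def wContractionCoeff {Y : Type*} [MeasurableSpace Y]
    (d : Y → Y → ℝ) (P : Kernel Y Y) : ℝ≥0∞ :=
  ⨆ (y₁ : Y) (y₂ : Y) (_ : y₁ ≠ y₂),
    wassersteinLike d (P y₁) (P y₂) / ENNReal.ofReal (d y₁ y₂)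

/-!
Optimal cost is convex along kernels: if `W(κ x, η x) ≤ f x` for all `x`, then
`W(∫ κ dξ, ∫ η dξ) ≤ ∫ f dξ`. The theorem is the case where `ξ` couples `μ₁` and `μ₂`, the kernels
are `(y₁, y₂) ↦ P y₁` and `(y₁, y₂) ↦ P y₂`, and `f = τ(P) · d`.

For a countable parameter space, convexity follows by mixing near-optimal couplings of `κ x` and
`η x`. In general this would require a measurable selection of couplings. That is avoided by
approximating: the map `x ↦ (f x, κ x, η x)` takes its values in a second-countable space, so `x`
can be replaced by one of countably many parameters, measurably in `x`, with values close to those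
at `x`. The limit is taken using the lower semicontinuity of `W` under weak convergence, which is a
consequence of Prokhorov's theorem.
-/

open Filter Topology TopologicalSpace
open scoped NNReal

/-- A coupling of `μ` and `ν`: a measure on the product whose marginals are `μ` and `ν`. -/
structure IsCoupling {α β : Type*} [MeasurableSpace α] [MeasurableSpace β]
    (ξ : Measure (α × β)) (μ : Measure α) (ν : Measure β) : Prop where
  map_fst : ξ.map Prod.fst = μ
  map_snd : ξ.map Prod.snd = ν

namespace IsCoupling

variable {α β : Type*} [MeasurableSpace α] [MeasurableSpace β]

theorem prod (μ : Measure α) (ν : Measure β) [IsProbabilityMeasure μ] [IsProbabilityMeasure ν] :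
    IsCoupling (μ.prod ν) μ ν :=
  ⟨by simp [Measure.map_fst_prod], by simp [Measure.map_snd_prod]⟩

theorem map_diag (μ : Measure α) : IsCoupling (μ.map fun x => (x, x)) μ μ where
  map_fst := by rw [Measure.map_map (by fun_prop) (by fun_prop)]; exact Measure.map_id
  map_snd := by rw [Measure.map_map (by fun_prop) (by fun_prop)]; exact Measure.map_id

theorem isProbabilityMeasure {ξ : Measure (α × β)} {μ : Measure α} {ν : Measure β}
    [IsProbabilityMeasure μ] (h : IsCoupling ξ μ ν) : IsProbabilityMeasure ξ := by
  have : IsProbabilityMeasure (ξ.map Prod.fst) := by rw [h.map_fst]; infer_instance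
  exact Measure.isProbabilityMeasure_of_map Prod.fst

theorem comp {J : Type*} [MeasurableSpace J] {ζ : Kernel J (α × β)} {κ : Kernel J α}
    {η : Kernel J β} (h : ∀ j, IsCoupling (ζ j) (κ j) (η j)) (ν : Measure J) :
    IsCoupling (ζ ∘ₘ ν) (κ ∘ₘ ν) (η ∘ₘ ν) where
  map_fst := by
    have hζ : ζ.map Prod.fst = κ := by
      ext1 j; rw [Kernel.map_apply _ measurable_fst, (h j).map_fst]
    rw [Measure.map_comp _ _ measurable_fst, hζ]
  map_snd := by
    have hζ : ζ.map Prod.snd = η := by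
      ext1 j; rw [Kernel.map_apply _ measurable_snd, (h j).map_snd]
    rw [Measure.map_comp _ _ measurable_snd, hζ]

end IsCoupling

theorem comap_comp_measure_eq_comp_map {X J Y : Type*} [MeasurableSpace X] [MeasurableSpace J]
    [MeasurableSpace Y] (κ : Kernel J Y) {k : X → J} (hk : Measurable k) (ξ : Measure X) :
    κ.comap k hk ∘ₘ ξ = κ ∘ₘ ξ.map k := by
  rw [← Kernel.comp_deterministic_eq_comap, ← Measure.comp_assoc,
    Measure.deterministic_comp_eq_map]

section BasicBounds

variable {Y : Type*} [MeasurableSpace Y] (d : Y → Y → ℝ)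

theorem wassersteinLike_eq_iInf_isCoupling (μ₁ μ₂ : Measure Y) :
    wassersteinLike d μ₁ μ₂ =
      ⨅ ξ : {ξ : Measure (Y × Y) // IsCoupling ξ μ₁ μ₂},
        ∫⁻ p, ENNReal.ofReal (d p.1 p.2) ∂ξ.1 := by
  refine le_antisymm (le_iInf fun ξ => ?_) (le_iInf fun ξ => le_iInf₂ fun h₁ h₂ => ?_)
  · exact iInf_le_of_le ξ.1 (iInf₂_le ξ.2.map_fst ξ.2.map_snd)
  · exact iInf_le_of_le ⟨ξ, h₁, h₂⟩ le_rfl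

variable {d} {μ₁ μ₂ : Measure Y}

theorem IsCoupling.wassersteinLike_le {ξ : Measure (Y × Y)} (hξ : IsCoupling ξ μ₁ μ₂) :
    wassersteinLike d μ₁ μ₂ ≤ ∫⁻ p, ENNReal.ofReal (d p.1 p.2) ∂ξ :=
  iInf_le_of_le ξ (iInf₂_le hξ.map_fst hξ.map_snd)

theorem exists_isCoupling_lintegral_lt {C : ℝ≥0∞} (h : wassersteinLike d μ₁ μ₂ < C) :
    ∃ ξ, IsCoupling ξ μ₁ μ₂ ∧ ∫⁻ p, ENNReal.ofReal (d p.1 p.2) ∂ξ < C := by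
  rw [wassersteinLike_eq_iInf_isCoupling, iInf_lt_iff] at h
  obtain ⟨⟨ξ, hξ⟩, hC⟩ := h
  exact ⟨ξ, hξ, hC⟩

theorem mul_wassersteinLike_eq_iInf [IsProbabilityMeasure μ₁] [IsProbabilityMeasure μ₂]
    {a : ℝ≥0∞} (ha : a ≠ ⊤) :
    a * wassersteinLike d μ₁ μ₂ =
      ⨅ ξ : {ξ : Measure (Y × Y) // IsCoupling ξ μ₁ μ₂},
        a * ∫⁻ p, ENNReal.ofReal (d p.1 p.2) ∂ξ.1 := by
  have : Nonempty {ξ : Measure (Y × Y) // IsCoupling ξ μ₁ μ₂} := ⟨⟨_, .prod μ₁ μ₂⟩⟩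
  rw [wassersteinLike_eq_iInf_isCoupling, ENNReal.mul_iInf fun h => absurd h ha]

theorem wassersteinLike_self (hd_self : ∀ x, d x x = 0)
    (hd_meas : Measurable fun p : Y × Y => d p.1 p.2) (μ : Measure Y) :
    wassersteinLike d μ μ = 0 := by
  refine le_antisymm ((IsCoupling.map_diag μ).wassersteinLike_le.trans_eq ?_) bot_le
  rw [lintegral_map hd_meas.ennreal_ofReal (by fun_prop)]
  simp [hd_self]

theorem wassersteinLike_le_wContractionCoeff_mul (hd_self : ∀ x, d x x = 0)
    (hd_meas : Measurable fun p : Y × Y => d p.1 p.2) {P : Kernel Y Y}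
    (hP : wContractionCoeff d P ≠ ⊤) (y₁ y₂ : Y) :
    wassersteinLike d (P y₁) (P y₂) ≤ wContractionCoeff d P * ENNReal.ofReal (d y₁ y₂) := by
  rcases eq_or_ne y₁ y₂ with rfl | hne
  · simp [wassersteinLike_self hd_self hd_meas]
  · rw [← ENNReal.div_le_iff_le_mul (Or.inr hP) (Or.inl ENNReal.ofReal_ne_top)]
    exact le_iSup_of_le y₁ (le_iSup₂_of_le y₂ hne le_rfl)

theorem wassersteinLike_comp_le_lintegral_of_countable {J : Type*} [MeasurableSpace J]
    [Countable J] [MeasurableSingletonClass J] {κ η : Kernel J Y} {f : J → ℝ≥0∞}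
    (hf : ∀ j, wassersteinLike d (κ j) (η j) < f j) (ν : Measure J) :
    wassersteinLike d (κ ∘ₘ ν) (η ∘ₘ ν) ≤ ∫⁻ j, f j ∂ν := by
  choose ζ hζ hζf using fun j => exists_isCoupling_lintegral_lt (hf j)
  have hmix := IsCoupling.comp (ζ := Kernel.ofFunOfCountable ζ) hζ ν
  calc wassersteinLike d (κ ∘ₘ ν) (η ∘ₘ ν)
      ≤ ∫⁻ p, ENNReal.ofReal (d p.1 p.2) ∂(Kernel.ofFunOfCountable ζ ∘ₘ ν) :=
        hmix.wassersteinLike_le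
    _ ≤ ∫⁻ j, ∫⁻ p, ENNReal.ofReal (d p.1 p.2) ∂(ζ j) ∂ν := Measure.lintegral_bind_le _ _ _
    _ ≤ ∫⁻ j, f j ∂ν := lintegral_mono fun j => (hζf j).le

theorem wassersteinLike_comap_comp_le_lintegral_of_countable {X J : Type*} [MeasurableSpace X]
    [MeasurableSpace J] [Countable J] [MeasurableSingletonClass J] {κ η : Kernel J Y}
    {f : J → ℝ≥0∞} (hf : ∀ j, wassersteinLike d (κ j) (η j) < f j) {k : X → J} (hk : Measurable k)
    (ξ : Measure X) :
    wassersteinLike d (κ.comap k hk ∘ₘ ξ) (η.comap k hk ∘ₘ ξ) ≤ ∫⁻ x, f (k x) ∂ξ := by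
  rw [comap_comp_measure_eq_comp_map, comap_comp_measure_eq_comp_map,
    ← lintegral_map (measurable_of_countable f) hk]
  exact wassersteinLike_comp_le_lintegral_of_countable hf _

end BasicBounds

section WeakConvergence

theorem lintegral_ofReal_le_liminf_of_tendsto {Ω ι : Type*} [MeasurableSpace Ω]
    [TopologicalSpace Ω] [OpensMeasurableSpace Ω] [HasOuterApproxClosed Ω] {l : Filter ι}
    [l.IsCountablyGenerated] {μs : ι → ProbabilityMeasure Ω} {μ : ProbabilityMeasure Ω}
    (h : Tendsto μs l (𝓝 μ)) {f : Ω → ℝ} (hf : LowerSemicontinuous f) (hf_nonneg : 0 ≤ f) :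
    ∫⁻ x, ENNReal.ofReal (f x) ∂(μ : Measure Ω) ≤
      l.liminf fun i => ∫⁻ x, ENNReal.ofReal (f x) ∂(μs i : Measure Ω) := by
  simp_rw [lintegral_eq_lintegral_meas_lt _ (Eventually.of_forall hf_nonneg)
    hf.measurable.aemeasurable]
  calc ∫⁻ t in Set.Ioi (0 : ℝ), (μ : Measure Ω) {x | t < f x}
      ≤ ∫⁻ t in Set.Ioi (0 : ℝ), l.liminf fun i => (μs i : Measure Ω) {x | t < f x} :=
        lintegral_mono fun t =>
          ProbabilityMeasure.le_liminf_measure_open_of_tendsto h (hf.isOpen_preimage t)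
    _ ≤ l.liminf fun i => ∫⁻ t in Set.Ioi (0 : ℝ), (μs i : Measure Ω) {x | t < f x} :=
        lintegral_liminf_le fun i => Antitone.measurable fun _ _ hst =>
          measure_mono fun _ hx => hst.trans_lt hx

theorem tendsto_comp_of_forall_tendsto {X Y : Type*} [MeasurableSpace X] [TopologicalSpace Y]
    [MeasurableSpace Y] [OpensMeasurableSpace Y] {κs : ℕ → Kernel X Y} {κ : Kernel X Y}
    [∀ n, IsMarkovKernel (κs n)] [IsMarkovKernel κ]
    (h : ∀ x, Tendsto (β := ProbabilityMeasure Y) (fun n => ⟨κs n x, inferInstance⟩) atTop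
      (𝓝 ⟨κ x, inferInstance⟩)) (ξ : Measure X) [IsProbabilityMeasure ξ] :
    Tendsto (β := ProbabilityMeasure Y) (fun n => ⟨κs n ∘ₘ ξ, inferInstance⟩) atTop
      (𝓝 ⟨κ ∘ₘ ξ, inferInstance⟩) := by
  refine ProbabilityMeasure.tendsto_iff_forall_lintegral_tendsto.2 fun g => ?_
  have hg : Measurable fun y => (g y : ℝ≥0∞) := g.continuous.measurable.coe_nnreal_ennreal
  simp_rw [ProbabilityMeasure.coe_mk,
    Measure.lintegral_bind (Kernel.aemeasurable _) hg.aemeasurable]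
  refine tendsto_lintegral_of_dominated_convergence (fun _ => edist 0 g)
    (fun n => hg.lintegral_kernel) (fun n => Eventually.of_forall fun x => ?_) ?_
    (Eventually.of_forall fun x =>
      ProbabilityMeasure.tendsto_iff_forall_lintegral_tendsto.1 (h x) g)
  · calc ∫⁻ y, g y ∂(κs n x) ≤ ∫⁻ _, edist 0 g ∂(κs n x) :=
          lintegral_mono fun y => g.apply_le_edist_zero y
      _ = edist 0 g := by simp
  · simp [edist_ne_top]

theorem exists_countable_isPiSystem_isTopologicalBasis (Y : Type*) [TopologicalSpace Y]
    [SecondCountableTopology Y] :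
    ∃ S : Set (Set Y), S.Countable ∧ IsPiSystem S ∧ IsTopologicalBasis S := by
  refine ⟨_, ?_, ?_, isTopologicalBasis_of_subbasis (isBasis_countableBasis Y).eq_generateFrom⟩
  · exact (Set.countable_ofPred_finite_subset (countable_countableBasis Y)).image _
  · rintro _ ⟨s, ⟨hs, hsB⟩, rfl⟩ _ ⟨t, ⟨ht, htB⟩, rfl⟩ -
    exact ⟨s ∪ t, ⟨hs.union ht, Set.union_subset hsB htB⟩, Set.sInter_union s t⟩

variable {Y : Type*} [TopologicalSpace Y] [PolishSpace Y] [MeasurableSpace Y] [BorelSpace Y]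

theorem isTightMeasureSet_range_of_tendsto {αs : ℕ → ProbabilityMeasure Y}
    {α : ProbabilityMeasure Y} (h : Tendsto αs atTop (𝓝 α)) :
    IsTightMeasureSet (Set.range fun n => (αs n : Measure Y)) := by
  let _ := upgradeIsCompletelyMetrizable Y
  refine (isTightMeasureSet_of_isCompact_closure h.isCompact_insert_range.closure).subset ?_
  rintro _ ⟨n, rfl⟩
  exact ⟨αs n, Set.mem_insert_of_mem _ ⟨n, rfl⟩, rfl⟩

theorem exists_subseq_tendsto_isCoupling {αs βs : ℕ → ProbabilityMeasure Y}
    {α β : ProbabilityMeasure Y} (hα : Tendsto αs atTop (𝓝 α)) (hβ : Tendsto βs atTop (𝓝 β))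
    {ζ : ℕ → ProbabilityMeasure (Y × Y)}
    (hζ : ∀ n, IsCoupling (ζ n : Measure (Y × Y)) (αs n) (βs n)) :
    ∃ (ξ : ProbabilityMeasure (Y × Y)) (φ : ℕ → ℕ), StrictMono φ ∧
      Tendsto (ζ ∘ φ) atTop (𝓝 ξ) ∧ IsCoupling (ξ : Measure (Y × Y)) α β := by
  have htight : IsTightMeasureSet
      {((μ : ProbabilityMeasure (Y × Y)) : Measure (Y × Y)) | μ ∈ Set.range ζ} := by
    refine IsTightMeasureSet.prodMk ((isTightMeasureSet_range_of_tendsto hα).subset ?_)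
      ((isTightMeasureSet_range_of_tendsto hβ).subset ?_)
    · rintro _ ⟨_, ⟨_, ⟨n, rfl⟩, rfl⟩, rfl⟩
      exact ⟨n, (hζ n).map_fst.symm⟩
    · rintro _ ⟨_, ⟨_, ⟨n, rfl⟩, rfl⟩, rfl⟩
      exact ⟨n, (hζ n).map_snd.symm⟩
  obtain ⟨ξ, -, φ, hφ, hξ⟩ := (isCompact_closure_of_isTightMeasureSet htight).tendsto_subseq
    fun n => subset_closure (Set.mem_range_self n)
  have hfst : ξ.map measurable_fst.aemeasurable = α := by
    refine tendsto_nhds_unique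
      (((ProbabilityMeasure.continuous_map continuous_fst).tendsto ξ).comp hξ) ?_
    exact (hα.comp hφ.tendsto_atTop).congr fun n => Subtype.ext (hζ (φ n)).map_fst.symm
  have hsnd : ξ.map measurable_snd.aemeasurable = β := by
    refine tendsto_nhds_unique
      (((ProbabilityMeasure.continuous_map continuous_snd).tendsto ξ).comp hξ) ?_
    exact (hβ.comp hφ.tendsto_atTop).congr fun n => Subtype.ext (hζ (φ n)).map_snd.symm
  exact ⟨ξ, φ, hφ, hξ, congrArg Subtype.val hfst, congrArg Subtype.val hsnd⟩

theorem wassersteinLike_le_liminf_of_tendsto {d : Y → Y → ℝ} (hd_nonneg : ∀ x y, 0 ≤ d x y)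
    (hd_lsc : LowerSemicontinuous fun p : Y × Y => d p.1 p.2)
    {αs βs : ℕ → ProbabilityMeasure Y} {α β : ProbabilityMeasure Y}
    (hα : Tendsto αs atTop (𝓝 α)) (hβ : Tendsto βs atTop (𝓝 β)) :
    wassersteinLike d (α : Measure Y) β ≤
      atTop.liminf fun n => wassersteinLike d (αs n : Measure Y) (βs n) := by
  refine le_of_forall_gt_imp_ge_of_dense fun C hC => ?_
  obtain ⟨ψ, hψ, hψC⟩ := extraction_of_frequently_atTop (frequently_lt_of_liminf_lt (h := hC))
  choose ζ hζ hζC using fun n => exists_isCoupling_lintegral_lt (hψC n)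
  obtain ⟨ξ, φ, -, hξ, hξαβ⟩ := exists_subseq_tendsto_isCoupling
    (hα.comp hψ.tendsto_atTop) (hβ.comp hψ.tendsto_atTop)
    (ζ := fun n => ⟨ζ n, (hζ n).isProbabilityMeasure⟩) hζ
  calc wassersteinLike d (α : Measure Y) β
      ≤ ∫⁻ p, ENNReal.ofReal (d p.1 p.2) ∂(ξ : Measure (Y × Y)) := hξαβ.wassersteinLike_le
    _ ≤ atTop.liminf fun n => ∫⁻ p, ENNReal.ofReal (d p.1 p.2) ∂(ζ (φ n)) :=
        lintegral_ofReal_le_liminf_of_tendsto hξ hd_lsc fun p => hd_nonneg p.1 p.2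
    _ ≤ atTop.liminf fun _ : ℕ => C :=
        liminf_le_liminf (Eventually.of_forall fun n => (hζC (φ n)).le)
    _ = C := liminf_const C

theorem wassersteinLike_comp_le_liminf_of_forall_tendsto {X : Type*} [MeasurableSpace X]
    {d : Y → Y → ℝ} (hd_nonneg : ∀ x y, 0 ≤ d x y)
    (hd_lsc : LowerSemicontinuous fun p : Y × Y => d p.1 p.2) {κs ηs : ℕ → Kernel X Y}
    {κ η : Kernel X Y} [∀ n, IsMarkovKernel (κs n)] [∀ n, IsMarkovKernel (ηs n)]
    [IsMarkovKernel κ] [IsMarkovKernel η]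
    (hκ : ∀ x, Tendsto (β := ProbabilityMeasure Y) (fun n => ⟨κs n x, inferInstance⟩) atTop
      (𝓝 ⟨κ x, inferInstance⟩))
    (hη : ∀ x, Tendsto (β := ProbabilityMeasure Y) (fun n => ⟨ηs n x, inferInstance⟩) atTop
      (𝓝 ⟨η x, inferInstance⟩)) (ξ : Measure X) [IsProbabilityMeasure ξ] :
    wassersteinLike d (κ ∘ₘ ξ) (η ∘ₘ ξ) ≤
      atTop.liminf fun n => wassersteinLike d (κs n ∘ₘ ξ) (ηs n ∘ₘ ξ) :=
  wassersteinLike_le_liminf_of_tendsto hd_nonneg hd_lsc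
    (αs := fun n => ⟨κs n ∘ₘ ξ, inferInstance⟩) (βs := fun n => ⟨ηs n ∘ₘ ξ, inferInstance⟩)
    (α := ⟨κ ∘ₘ ξ, inferInstance⟩) (β := ⟨η ∘ₘ ξ, inferInstance⟩)
    (tendsto_comp_of_forall_tendsto hκ ξ) (tendsto_comp_of_forall_tendsto hη ξ)

end WeakConvergence

section CountableApproximation

variable {X : Type*} [MeasurableSpace X] [Nonempty X]

theorem exists_seq_forall_exists_measurable_dist_lt {E : Type*} [PseudoMetricSpace E]
    [SecondCountableTopology E] [MeasurableSpace E] [OpensMeasurableSpace E] {G : X → E}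
    (hG : Measurable G) :
    ∃ x : ℕ → X, ∀ ε > 0, ∃ k : X → ℕ, Measurable k ∧ ∀ p, dist (G p) (G (x (k p))) < ε := by
  classical
  obtain ⟨u, hu⟩ := exists_dense_seq (Set.range G)
  choose x hx using fun n => (u n).2
  refine ⟨x, fun ε hε => ?_⟩
  have hnear : ∀ p, ∃ n, dist (G p) (G (x n)) < ε := fun p => by
    obtain ⟨n, hn⟩ := hu.exists_dist_lt ⟨G p, p, rfl⟩ hε
    exact ⟨n, by rwa [hx]⟩
  exact ⟨fun p => Nat.find (hnear p),
    measurable_find hnear fun n => hG Metric.isOpen_ball.measurableSet,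
    fun p => Nat.find_spec (hnear p)⟩

theorem exists_countable_approx {E : Type*} [TopologicalSpace E] [PseudoMetrizableSpace E]
    [SecondCountableTopology E] [MeasurableSpace E] [OpensMeasurableSpace E] {f : X → ℝ≥0}
    (hf : Measurable f) {G : X → E} (hG : Measurable G) :
    ∃ (x : ℕ → X) (k : ℕ → X → ℕ), (∀ n, Measurable (k n)) ∧
      (∀ n p, f (x (k n p)) ≤ f p + 1 / (n + 1)) ∧
      ∀ p, Tendsto (fun n => G (x (k n p))) atTop (𝓝 (G p)) := by
  let _ := pseudoMetrizableSpacePseudoMetric E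
  obtain ⟨x, hx⟩ := exists_seq_forall_exists_measurable_dist_lt (hf.prodMk hG)
  choose k hk_meas hk using fun n : ℕ => hx (1 / ((n : ℝ) + 1)) Nat.one_div_pos_of_nat
  refine ⟨x, k, hk_meas, fun n p => ?_, fun p => ?_⟩
  · have hdist : |(f p : ℝ) - f (x (k n p))| < 1 / ((n : ℝ) + 1) :=
      (le_max_left _ _).trans_lt (hk n p)
    rw [← NNReal.coe_le_coe]
    push_cast
    linarith [(abs_lt.1 hdist).1]
  · rw [tendsto_iff_dist_tendsto_zero]
    refine squeeze_zero (fun _ => dist_nonneg) (fun n => ?_)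
      (tendsto_one_div_add_atTop_nhds_zero_nat (𝕜 := ℝ))
    rw [dist_comm]
    exact (le_max_right _ _).trans (hk n p).le

theorem exists_countable_approx_kernel {Y : Type*} [TopologicalSpace Y]
    [SecondCountableTopology Y] [MeasurableSpace Y] [OpensMeasurableSpace Y]
    (κ η : Kernel X Y) [IsMarkovKernel κ] [IsMarkovKernel η] {f : X → ℝ≥0} (hf : Measurable f) :
    ∃ (x : ℕ → X) (k : ℕ → X → ℕ), (∀ n, Measurable (k n)) ∧
      (∀ n p, f (x (k n p)) ≤ f p + 1 / (n + 1)) ∧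
      (∀ p, Tendsto (β := ProbabilityMeasure Y) (fun n => ⟨κ (x (k n p)), inferInstance⟩) atTop
        (𝓝 ⟨κ p, inferInstance⟩)) ∧
      ∀ p, Tendsto (β := ProbabilityMeasure Y) (fun n => ⟨η (x (k n p)), inferInstance⟩) atTop
        (𝓝 ⟨η p, inferInstance⟩) := by
  obtain ⟨S, hS_countable, hS_pi, hS_basis⟩ := exists_countable_isPiSystem_isTopologicalBasis Y
  have : Countable S := hS_countable
  have hS_meas : ∀ s ∈ S, MeasurableSet s := fun s hs => (hS_basis.isOpen hs).measurableSet
  have hS_tendsto {μs : ℕ → ProbabilityMeasure Y} {μ : ProbabilityMeasure Y}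
      (h : ∀ s : S, Tendsto (fun n => μs n s) atTop (𝓝 (μ s))) : Tendsto μs atTop (𝓝 μ) := by
    refine hS_pi.tendsto_probabilityMeasure_of_tendsto_of_mem hS_meas (fun u hu y hy => ?_)
      fun s hs => h ⟨s, hs⟩
    obtain ⟨s, hs, hys, hsu⟩ := hS_basis.exists_subset_of_mem_open hy hu
    exact ⟨s, hs, (hS_basis.isOpen hs).mem_nhds hys, hsu⟩
  let G : X → S → ℝ≥0 × ℝ≥0 := fun p s => ((κ p s).toNNReal, (η p s).toNNReal)
  have hG : Measurable G := measurable_pi_lambda _ fun s =>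
    (κ.measurable_coe (hS_meas s s.2)).ennreal_toNNReal.prodMk
      (η.measurable_coe (hS_meas s s.2)).ennreal_toNNReal
  obtain ⟨x, k, hk, hfk, hGk⟩ := exists_countable_approx hf hG
  have hcoord (p : X) (s : S) : Tendsto (fun n => G (x (k n p)) s) atTop (𝓝 (G p s)) :=
    tendsto_pi_nhds.1 (hGk p) s
  exact ⟨x, k, hk, hfk, fun p => hS_tendsto fun s => (hcoord p s).fst_nhds,
    fun p => hS_tendsto fun s => (hcoord p s).snd_nhds⟩

end CountableApproximation

section ConvexityAlongKernels

variable {Y : Type*} [TopologicalSpace Y] [PolishSpace Y] [MeasurableSpace Y] [BorelSpace Y]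
  {d : Y → Y → ℝ}

theorem wassersteinLike_comp_le_lintegral {X : Type*} [MeasurableSpace X]
    (hd_nonneg : ∀ x y, 0 ≤ d x y) (hd_lsc : LowerSemicontinuous fun p : Y × Y => d p.1 p.2)
    {κ η : Kernel X Y} [IsMarkovKernel κ] [IsMarkovKernel η] {f : X → ℝ≥0} (hf : Measurable f)
    (h : ∀ x, wassersteinLike d (κ x) (η x) ≤ f x) (ξ : Measure X) [IsProbabilityMeasure ξ] :
    wassersteinLike d (κ ∘ₘ ξ) (η ∘ₘ ξ) ≤ ∫⁻ x, f x ∂ξ := by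
  have : Nonempty X := nonempty_of_isProbabilityMeasure ξ
  obtain ⟨x, k, hk, hfk, hκ, hη⟩ := exists_countable_approx_kernel κ η hf
  have hx : Measurable x := measurable_from_nat
  let ε : ℕ → ℝ≥0 := fun n => 1 / (n + 1)
  have hε_pos (n : ℕ) : 0 < ε n := by positivity
  have hlt (n j : ℕ) : wassersteinLike d (κ.comap x hx j) (η.comap x hx j) <
      (f (x j) + ε n : ℝ≥0) :=
    (h (x j)).trans_lt (ENNReal.coe_lt_coe.2 (lt_add_of_pos_right _ (hε_pos n)))
  have hle (n : ℕ) : ∫⁻ p, (f (x (k n p)) + ε n : ℝ≥0) ∂ξ ≤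
      ∫⁻ p, f p ∂ξ + (ε n + ε n : ℝ≥0) :=
    calc ∫⁻ p, (f (x (k n p)) + ε n : ℝ≥0) ∂ξ
        ≤ ∫⁻ p, (f p + (ε n + ε n : ℝ≥0)) ∂ξ := lintegral_mono fun p => by
          rw [← ENNReal.coe_add, ← add_assoc]
          exact ENNReal.coe_le_coe.2 (add_le_add_left (hfk n p) (ε n))
      _ = ∫⁻ p, f p ∂ξ + (ε n + ε n : ℝ≥0) := by
          rw [lintegral_add_right _ measurable_const, lintegral_const, measure_univ, mul_one]
  have hε : Tendsto ε atTop (𝓝 0) := tendsto_one_div_add_atTop_nhds_zero_nat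
  have hlim : Tendsto (fun n => ∫⁻ p, f p ∂ξ + (ε n + ε n : ℝ≥0)) atTop (𝓝 (∫⁻ p, f p ∂ξ)) := by
    simpa using tendsto_const_nhds.add (ENNReal.tendsto_coe.2 (hε.add hε))
  calc wassersteinLike d (κ ∘ₘ ξ) (η ∘ₘ ξ)
      ≤ atTop.liminf fun n => wassersteinLike d ((κ.comap x hx).comap (k n) (hk n) ∘ₘ ξ)
          ((η.comap x hx).comap (k n) (hk n) ∘ₘ ξ) :=
        wassersteinLike_comp_le_liminf_of_forall_tendsto hd_nonneg hd_lsc hκ hη ξ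
    _ ≤ atTop.liminf fun n => ∫⁻ p, f p ∂ξ + (ε n + ε n : ℝ≥0) :=
        liminf_le_liminf (Eventually.of_forall fun n =>
          (wassersteinLike_comap_comp_le_lintegral_of_countable (hlt n) (hk n) ξ).trans (hle n))
    _ = ∫⁻ p, f p ∂ξ := hlim.liminf_eq

theorem IsCoupling.wassersteinLike_comp_le (hd_nonneg : ∀ x y, 0 ≤ d x y)
    (hd_self : ∀ x, d x x = 0) (hd_lsc : LowerSemicontinuous fun p : Y × Y => d p.1 p.2)
    {P : Kernel Y Y} [IsMarkovKernel P] (hP : wContractionCoeff d P ≠ ⊤)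
    {μ₁ μ₂ : Measure Y} [IsProbabilityMeasure μ₁] {ξ : Measure (Y × Y)}
    (hξ : IsCoupling ξ μ₁ μ₂) :
    wassersteinLike d (P ∘ₘ μ₁) (P ∘ₘ μ₂) ≤
      wContractionCoeff d P * ∫⁻ p, ENNReal.ofReal (d p.1 p.2) ∂ξ := by
  have := hξ.isProbabilityMeasure
  have hd_meas : Measurable fun p : Y × Y => d p.1 p.2 := hd_lsc.measurable
  let f : Y × Y → ℝ≥0 := fun p => (wContractionCoeff d P).toNNReal * (d p.1 p.2).toNNReal
  have hf (p : Y × Y) : (f p : ℝ≥0∞) = wContractionCoeff d P * ENNReal.ofReal (d p.1 p.2) := by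
    rw [ENNReal.coe_mul, ENNReal.coe_toNNReal hP, ENNReal.ofReal]
  calc wassersteinLike d (P ∘ₘ μ₁) (P ∘ₘ μ₂)
      = wassersteinLike d (P.comap Prod.fst measurable_fst ∘ₘ ξ)
          (P.comap Prod.snd measurable_snd ∘ₘ ξ) := by
        rw [comap_comp_measure_eq_comp_map, comap_comp_measure_eq_comp_map, hξ.map_fst,
          hξ.map_snd]
    _ ≤ ∫⁻ p, f p ∂ξ :=
        wassersteinLike_comp_le_lintegral hd_nonneg hd_lsc (hd_meas.real_toNNReal.const_mul _)
          (fun p => (wassersteinLike_le_wContractionCoeff_mul hd_self hd_meas hP _ _).trans_eq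
            (hf p).symm) ξ
    _ = wContractionCoeff d P * ∫⁻ p, ENNReal.ofReal (d p.1 p.2) ∂ξ := by
        simp_rw [hf]
        exact lintegral_const_mul _ hd_meas.ennreal_ofReal

theorem wassersteinLike_bind_le_general (hd_nonneg : ∀ x y, 0 ≤ d x y)
    (hd_self : ∀ x, d x x = 0) (hd_lsc : LowerSemicontinuous fun p : Y × Y => d p.1 p.2)
    (P : Kernel Y Y) [IsMarkovKernel P] (hP : wContractionCoeff d P < ⊤)
    (μ₁ μ₂ : Measure Y) [IsProbabilityMeasure μ₁] [IsProbabilityMeasure μ₂] :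
    wassersteinLike d (μ₁.bind P) (μ₂.bind P) ≤
      wContractionCoeff d P * wassersteinLike d μ₁ μ₂ := by
  rw [mul_wassersteinLike_eq_iInf hP.ne]
  exact le_iInf fun ξ => ξ.2.wassersteinLike_comp_le hd_nonneg hd_self hd_lsc hP.ne

end ConvexityAlongKernels

/-- Contractivity: `W(μ₁P, μ₂P) ≤ τ(P) · W(μ₁, μ₂)`, where `μP` is the pushforward
`(μP)(A) = ∫ P(y,A) μ(dy)`. -/
theorem wassersteinLike_bind_le
    {Y : Type*} [MetricSpace Y] [PolishSpace Y] [MeasurableSpace Y] [BorelSpace Y]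
    (d : Y → Y → ℝ)
    (hd_nonneg : ∀ x y, 0 ≤ d x y)
    (hd_symm : ∀ x y, d x y = d y x)
    (hd_eq : ∀ x y, d x y = 0 ↔ x = y)
    (hd_lsc : LowerSemicontinuous (fun p : Y × Y => d p.1 p.2))
    (P : Kernel Y Y) [IsMarkovKernel P]
    (hP : wContractionCoeff d P < ⊤)
    (μ₁ μ₂ : Measure Y) [IsProbabilityMeasure μ₁] [IsProbabilityMeasure μ₂] :
    wassersteinLike d (μ₁.bind P) (μ₂.bind P) ≤
      wContractionCoeff d P * wassersteinLike d μ₁ μ₂ :=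
  wassersteinLike_bind_le_general hd_nonneg (fun x => (hd_eq x x).2 rfl) hd_lsc P hP μ₁ μ₂
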